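/- arXiv:1002.4736 — 2 statements merged into one kernel-verified Lean document; each statement's English description precedes it below -/
import Mathlib

section
/- Let a and b be smooth compactly supported functions on ℝ³ = ℝ²_h × ℝ_v. Then ‖ab‖_{Ḣ^{-1/2}(ℝ³)} ≤ C ‖a‖_{L²_v Ḣ^{1/2}_h} ‖b(·,0)‖_{L²(ℝ²)} + C ‖x₃ a‖_{L²(ℝ³)} ‖∂₃ b‖_{L^∞_v Ḣ^{1/2}_h} for a universal constant C. -/
open MeasureTheory Real
open scoped FourierTransform ENNReal

noncomputable section

/-- `ℝ^d` as a Euclidean space. -/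
abbrev E (d : ℕ) := EuclideanSpace ℝ (Fin d)

/-- Homogeneous Sobolev norm `‖f‖_{Ḣ^s(ℝ^d)} = (∫ |ξ|^{2s} |𝓕f(ξ)|² dξ)^{1/2}`. -/
noncomputable def hNorm (d : ℕ) (s : ℝ) (f : E d → ℂ) : ℝ :=
  (∫ ξ : E d, ‖ξ‖ ^ (2 * s) * ‖𝓕 f ξ‖ ^ 2) ^ (1/2 : ℝ)

/-- Embedding `ℝ² × ℝ → ℝ³`, `(x_h, x₃) ↦ (x₁,x₂,x₃)`. -/
noncomputable def emb (xh : E 2) (t : ℝ) : E 3 :=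
  (EuclideanSpace.equiv (Fin 3) ℝ).symm ![xh 0, xh 1, t]

lemma ennreal_add_sq_le (a b : ℝ≥0∞) : (a + b) ^ 2 ≤ 2 * (a ^ 2 + b ^ 2) := by
  have h := ENNReal.rpow_add_le_mul_rpow_add_rpow a b (p := 2) (by norm_num)
  norm_num at h
  exact h

lemma cs_sq {α : Type*} [MeasurableSpace α] (μ : Measure α) {u v : α → ℝ≥0∞}
    (hu : AEMeasurable u μ) (hv : AEMeasurable v μ) :
    (∫⁻ x, u x * v x ∂μ) ^ 2 ≤ (∫⁻ x, u x ^ 2 ∂μ) * (∫⁻ x, v x ^ 2 ∂μ) := by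
  have h := ENNReal.lintegral_mul_le_Lp_mul_Lq μ (Real.HolderConjugate.two_two) hu hv
  have h2 := pow_le_pow_left' h 2
  refine h2.trans (le_of_eq ?_)
  simp only [ENNReal.rpow_two]
  rw [mul_pow, ← ENNReal.rpow_two, ← ENNReal.rpow_two, ← ENNReal.rpow_mul, ← ENNReal.rpow_mul]
  norm_num

lemma kernel_bound : ∃ K : ℝ≥0∞, K ≠ ⊤ ∧ ∀ r : ℝ, 0 ≤ r →
    ∫⁻ ζ : E 2, (if ‖ζ‖ ≤ r then ‖ζ‖ₑ⁻¹ else 0) ≤ K * ENNReal.ofReal r := by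
  refine ⟨ENNReal.ofReal (2 * volume.real (Metric.ball (0 : E 2) 1)), ENNReal.ofReal_ne_top, fun r hr => ?_⟩
  set f : ℝ → ℝ := Set.indicator (Set.Iic r) (fun y => y⁻¹) with hf
  have h1 : ∀ᵐ ζ : E 2, (if ‖ζ‖ ≤ r then ‖ζ‖ₑ⁻¹ else 0) = ENNReal.ofReal (f ‖ζ‖) := by
    filter_upwards [compl_mem_ae_iff.2 (measure_singleton (0 : E 2))] with ζ hζ
    have hpos : 0 < ‖ζ‖ := norm_pos_iff.2 hζ
    by_cases h : ‖ζ‖ ≤ r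
    · simp [hf, h, ENNReal.ofReal_inv_of_pos hpos]
    · simp [hf, h]
  have h3 : ∀ y ∈ Set.Ioi (0:ℝ), y ^ (Module.finrank ℝ (E 2) - 1) • f y
      = Set.indicator (Set.Iic r) (fun _ => (1:ℝ)) y := by
    intro y hy
    have hy : 0 < y := hy
    by_cases h : y ≤ r
    · simp [hf, h, hy.ne']
    · simp [hf, h]
  have hvol : volume (Set.Iic r ∩ Set.Ioi (0:ℝ)) = ENNReal.ofReal r := by
    rw [Set.inter_comm, Set.Ioi_inter_Iic]; simp
  have hint : Integrable (fun ζ : E 2 => f ‖ζ‖) := by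
    rw [integrable_fun_norm_addHaar, integrableOn_congr_fun h3 measurableSet_Ioi]
    rw [IntegrableOn, integrable_indicator_iff measurableSet_Iic]
    refine integrableOn_const ?_
    rw [Measure.restrict_apply measurableSet_Iic, hvol]; simp
  rw [lintegral_congr_ae h1, ← ofReal_integral_eq_lintegral_ofReal hint]
  · rw [integral_fun_norm_addHaar, setIntegral_congr_fun measurableSet_Ioi h3,
      integral_indicator measurableSet_Iic, ← ENNReal.ofReal_mul (by positivity)]
    apply ENNReal.ofReal_le_ofReal
    simp [Measure.real, Measure.restrict_apply, hvol, hr]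
    rw [mul_assoc]
  · filter_upwards with ζ
    by_cases h : ‖ζ‖ ≤ r <;> simp [hf, h]

lemma bilin_bound : ∃ K : ℝ≥0∞, K ≠ ⊤ ∧ ∀ F G : E 2 → ℝ≥0∞, Measurable F → Measurable G →
    ∫⁻ ξ, ‖ξ‖ₑ⁻¹ * (∫⁻ ζ, F ζ * G (ξ - ζ)) ^ 2 ≤
      K * (∫⁻ ζ, ‖ζ‖ₑ * F ζ ^ 2) * (∫⁻ ζ, G ζ ^ 2) := by
  obtain ⟨K, hK, hKb⟩ := kernel_bound
  refine ⟨4 * K, ENNReal.mul_ne_top (by simp) hK, fun F G hF hG => ?_⟩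
  have hKb' : ∀ ξ : E 2, ∫⁻ ζ : E 2, (if ‖ζ‖ ≤ ‖ξ‖ then ‖ζ‖ₑ⁻¹ else 0) ≤ K * ‖ξ‖ₑ := by
    intro ξ
    simpa using hKb ‖ξ‖ (norm_nonneg _)
  have trans1 : ∀ ζ : E 2, ∫⁻ ξ, G (ξ - ζ) ^ 2 = ∫⁻ ξ, G ξ ^ 2 := fun ζ =>
    lintegral_sub_right_eq_self (fun ξ => G ξ ^ 2) ζ
  have trans2 : ∀ ξ : E 2, ∫⁻ ζ, G (ξ - ζ) ^ 2 = ∫⁻ ξ, G ξ ^ 2 := fun ξ =>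
    lintegral_sub_left_eq_self (fun ξ => G ξ ^ 2) ξ
  have mle : ∀ ξ : E 2, MeasurableSet {ζ : E 2 | ‖ζ‖ ≤ ‖ξ‖} := fun ξ =>
    measurableSet_le measurable_norm measurable_const
  let A : E 2 → ℝ≥0∞ := fun ξ => ∫⁻ ζ, if ‖ζ‖ ≤ ‖ξ‖ then F ζ * G (ξ - ζ) else 0
  let B : E 2 → ℝ≥0∞ := fun ξ => ∫⁻ ζ, if ‖ξ‖ ≤ ‖ζ‖ then F ζ * G (ξ - ζ) else 0
  have hA : ∀ ξ, ‖ξ‖ₑ⁻¹ * A ξ ^ 2 ≤ K * ∫⁻ ζ, ‖ζ‖ₑ * F ζ ^ 2 * G (ξ - ζ) ^ 2 := by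
    intro ξ
    have e : A ξ = ∫⁻ ζ, (‖ζ‖ₑ ^ (1/2:ℝ) * (F ζ * G (ξ - ζ))) *
        (if ‖ζ‖ ≤ ‖ξ‖ then (‖ζ‖ₑ ^ (1/2:ℝ))⁻¹ else 0) := by
      apply lintegral_congr_ae
      filter_upwards [compl_mem_ae_iff.2 (measure_singleton (0 : E 2))] with ζ hζ
      have h0 : ‖ζ‖ₑ ^ (1/2:ℝ) ≠ 0 := by
        simpa [ENNReal.rpow_eq_zero_iff] using hζ
      have ht : ‖ζ‖ₑ ^ (1/2:ℝ) ≠ ⊤ := by simp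
      split_ifs
      · rw [mul_comm (_ * _) (_⁻¹), ← mul_assoc (_⁻¹), ENNReal.inv_mul_cancel h0 ht, one_mul]
      · simp
    have cs := cs_sq (volume : Measure (E 2))
      (u := fun ζ => ‖ζ‖ₑ ^ (1/2:ℝ) * (F ζ * G (ξ - ζ)))
      (v := fun ζ => if ‖ζ‖ ≤ ‖ξ‖ then (‖ζ‖ₑ ^ (1/2:ℝ))⁻¹ else 0)
      (by fun_prop) (Measurable.ite (mle ξ) (by fun_prop) (by fun_prop)).aemeasurable
    rw [← e] at cs
    have e1 : ∀ ζ : E 2, (‖ζ‖ₑ ^ (1/2:ℝ) * (F ζ * G (ξ - ζ))) ^ 2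
        = ‖ζ‖ₑ * F ζ ^ 2 * G (ξ - ζ) ^ 2 := by
      intro ζ
      rw [mul_pow, mul_pow, ← ENNReal.rpow_two, ← ENNReal.rpow_mul]
      norm_num [mul_assoc]
    have e2 : ∀ ζ : E 2, (if ‖ζ‖ ≤ ‖ξ‖ then (‖ζ‖ₑ ^ (1/2:ℝ))⁻¹ else 0) ^ 2
        = (if ‖ζ‖ ≤ ‖ξ‖ then ‖ζ‖ₑ⁻¹ else 0) := by
      intro ζ
      split_ifs
      · rw [← ENNReal.rpow_two, ← ENNReal.inv_rpow, ← ENNReal.rpow_mul]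
        norm_num
      · simp
    simp only [e1, e2] at cs
    calc ‖ξ‖ₑ⁻¹ * A ξ ^ 2 ≤ ‖ξ‖ₑ⁻¹ * ((∫⁻ ζ, ‖ζ‖ₑ * F ζ ^ 2 * G (ξ - ζ) ^ 2) * (K * ‖ξ‖ₑ)) := by
          gcongr; exact cs.trans (by gcongr; exact hKb' ξ)
      _ = (‖ξ‖ₑ⁻¹ * ‖ξ‖ₑ) * (K * (∫⁻ ζ, ‖ζ‖ₑ * F ζ ^ 2 * G (ξ - ζ) ^ 2)) := by ring
      _ ≤ 1 * (K * (∫⁻ ζ, ‖ζ‖ₑ * F ζ ^ 2 * G (ξ - ζ) ^ 2)) := by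
          gcongr; exact ENNReal.inv_mul_le_one _
      _ = _ := one_mul _
  have hB : ∀ ξ, ‖ξ‖ₑ⁻¹ * B ξ ^ 2 ≤
      (∫⁻ ζ, (if ‖ξ‖ ≤ ‖ζ‖ then ‖ξ‖ₑ⁻¹ else 0) * F ζ ^ 2) * (∫⁻ ζ, G ζ ^ 2) := by
    intro ξ
    have mle' : MeasurableSet {ζ : E 2 | ‖ξ‖ ≤ ‖ζ‖} :=
      measurableSet_le measurable_const measurable_norm
    have cs := cs_sq (volume : Measure (E 2))
      (u := fun ζ => if ‖ξ‖ ≤ ‖ζ‖ then F ζ else 0)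
      (v := fun ζ => G (ξ - ζ))
      (Measurable.ite mle' (by fun_prop) (by fun_prop)).aemeasurable (by fun_prop)
    rw [trans2] at cs
    have e : B ξ = ∫⁻ ζ, (if ‖ξ‖ ≤ ‖ζ‖ then F ζ else 0) * G (ξ - ζ) := by
      apply lintegral_congr; intro ζ; split_ifs <;> simp
    rw [← e] at cs
    calc _ ≤ ‖ξ‖ₑ⁻¹ * ((∫⁻ ζ, (if ‖ξ‖ ≤ ‖ζ‖ then F ζ else 0) ^ 2) * (∫⁻ ζ, G ζ ^ 2)) := by
          gcongr
      _ = (∫⁻ ζ, ‖ξ‖ₑ⁻¹ * (if ‖ξ‖ ≤ ‖ζ‖ then F ζ else 0) ^ 2) * (∫⁻ ζ, G ζ ^ 2) := by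
          rw [← mul_assoc, lintegral_const_mul]
          exact (Measurable.ite mle' (by fun_prop) (by fun_prop)).pow_const 2
      _ = _ := by
          congr 1
          apply lintegral_congr; intro ζ; split_ifs <;> simp
  have hAB : ∀ ξ, ∫⁻ ζ, F ζ * G (ξ - ζ) ≤ A ξ + B ξ := by
    intro ξ
    rw [← lintegral_add_left]
    · apply lintegral_mono; intro ζ
      rcases le_total ‖ζ‖ ‖ξ‖ with h | h
      · simp [h]
      · simp [h]
    · exact Measurable.ite (mle ξ) (by fun_prop) (by fun_prop)
  have mle2 : MeasurableSet {p : E 2 × E 2 | ‖p.1‖ ≤ ‖p.2‖} :=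
    measurableSet_le (by fun_prop) (by fun_prop)
  have mle3 : Measurable (fun p : E 2 × E 2 => if ‖p.1‖ ≤ ‖p.2‖ then ‖p.1‖ₑ⁻¹ else 0) :=
    Measurable.ite mle2 (by fun_prop) (by fun_prop)
  have IA : ∫⁻ ξ, (∫⁻ ζ, ‖ζ‖ₑ * F ζ ^ 2 * G (ξ - ζ) ^ 2)
      = (∫⁻ ζ, ‖ζ‖ₑ * F ζ ^ 2) * (∫⁻ ζ, G ζ ^ 2) := by
    rw [lintegral_lintegral_swap (by fun_prop), ← lintegral_mul_const _ (by fun_prop)]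
    apply lintegral_congr; intro ζ
    rw [lintegral_const_mul _ (by fun_prop), trans1]
  have IB : ∫⁻ ξ : E 2, (∫⁻ ζ : E 2, (if ‖ξ‖ ≤ ‖ζ‖ then ‖ξ‖ₑ⁻¹ else 0) * F ζ ^ 2)
      ≤ K * (∫⁻ ζ, ‖ζ‖ₑ * F ζ ^ 2) := by
    rw [lintegral_lintegral_swap
      ((mle3.mul ((hF.comp measurable_snd).pow_const 2)).aemeasurable),
      ← lintegral_const_mul _ (by fun_prop)]
    apply lintegral_mono; intro ζ
    simp only
    rw [lintegral_mul_const _ (Measurable.ite (mle ζ) (by fun_prop) (by fun_prop)), ← mul_assoc]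
    gcongr
    exact hKb' ζ
  have hm : Measurable (fun ξ : E 2 => ∫⁻ ζ, ‖ζ‖ₑ * F ζ ^ 2 * G (ξ - ζ) ^ 2) := by
    apply Measurable.lintegral_prod_right' (f := fun p : E 2 × E 2 =>
      ‖p.2‖ₑ * F p.2 ^ 2 * G (p.1 - p.2) ^ 2)
    fun_prop
  have hm2 : Measurable (fun ξ : E 2 => ∫⁻ ζ, (if ‖ξ‖ ≤ ‖ζ‖ then ‖ξ‖ₑ⁻¹ else 0) * F ζ ^ 2) :=
    Measurable.lintegral_prod_right' (mle3.mul ((hF.comp measurable_snd).pow_const 2))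
  calc _ ≤ ∫⁻ ξ, (2 * (K * ∫⁻ ζ, ‖ζ‖ₑ * F ζ ^ 2 * G (ξ - ζ) ^ 2) +
        2 * ((∫⁻ ζ, (if ‖ξ‖ ≤ ‖ζ‖ then ‖ξ‖ₑ⁻¹ else 0) * F ζ ^ 2) * (∫⁻ ζ, G ζ ^ 2))) := by
        apply lintegral_mono; intro ξ
        simp only
        calc _ ≤ ‖ξ‖ₑ⁻¹ * (A ξ + B ξ) ^ 2 := by gcongr; exact hAB ξ
          _ ≤ ‖ξ‖ₑ⁻¹ * (2 * (A ξ ^ 2 + B ξ ^ 2)) := by gcongr; exact ennreal_add_sq_le _ _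
          _ = 2 * (‖ξ‖ₑ⁻¹ * A ξ ^ 2) + 2 * (‖ξ‖ₑ⁻¹ * B ξ ^ 2) := by ring
          _ ≤ _ := add_le_add (mul_le_mul_right (hA ξ) 2) (mul_le_mul_right (hB ξ) 2)
    _ = 2 * (K * ((∫⁻ ζ, ‖ζ‖ₑ * F ζ ^ 2) * (∫⁻ ζ, G ζ ^ 2))) +
        2 * ((∫⁻ ξ : E 2, (∫⁻ ζ : E 2, (if ‖ξ‖ ≤ ‖ζ‖ then ‖ξ‖ₑ⁻¹ else 0) * F ζ ^ 2)) * (∫⁻ ζ, G ζ ^ 2)) := by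
        rw [lintegral_add_left (by fun_prop), lintegral_const_mul _ (by fun_prop),
          lintegral_const_mul _ hm, IA, lintegral_const_mul _ (by fun_prop),
          lintegral_mul_const _ hm2]
    _ ≤ 2 * (K * ((∫⁻ ζ, ‖ζ‖ₑ * F ζ ^ 2) * (∫⁻ ζ, G ζ ^ 2))) +
        2 * ((K * (∫⁻ ζ, ‖ζ‖ₑ * F ζ ^ 2)) * (∫⁻ ζ, G ζ ^ 2)) := by gcongr
    _ = _ := by ring

/-- Fourier transform of a product of Schwartz functions as a convolution. -/
lemma fourier_prod_eq (f g : SchwartzMap (E 2) ℂ) (ξ : E 2) :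
    𝓕 (fun x => f x * g x) ξ = ∫ ζ, 𝓕 (f : E 2 → ℂ) ζ * 𝓕 (g : E 2 → ℂ) (ξ - ζ) := by
  have h := SchwartzMap.convolution_apply (ContinuousLinearMap.mul ℂ ℂ) (𝓕⁻ f) (𝓕⁻ g) (-ξ)
  have h1 : (SchwartzMap.convolution (ContinuousLinearMap.mul ℂ ℂ) (𝓕⁻ f) (𝓕⁻ g)) (-ξ)
      = 𝓕⁻ (fun x => f x * g x) (-ξ) := by
    simp only [SchwartzMap.convolution]
    simp [SchwartzMap.fourierInv_coe]
    rfl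
  have h2 : 𝓕⁻ (fun x => f x * g x) (-ξ) = 𝓕 (fun x => f x * g x) ξ := by
    rw [Real.fourierInv_eq_fourier_neg, neg_neg]
  rw [← h2, ← h1, h, convolution, ← integral_neg_eq_self]
  congr 1; ext ζ
  simp only [ContinuousLinearMap.mul_apply', SchwartzMap.fourierInv_coe,
    Real.fourierInv_eq_fourier_neg]
  congr 2 <;> simp
  rw [sub_eq_neg_add]

lemma plancherel_enorm {V : Type*} [NormedAddCommGroup V] [InnerProductSpace ℝ V]
    [FiniteDimensional ℝ V] [MeasurableSpace V] [BorelSpace V] (f : SchwartzMap V ℂ) :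
    ∫⁻ ξ, ‖𝓕 (f : V → ℂ) ξ‖ₑ ^ 2 = ∫⁻ x, ‖f x‖ₑ ^ 2 := by
  have key : ∀ h : SchwartzMap V ℂ, ∫⁻ x, ‖h x‖ₑ ^ 2 = ENNReal.ofReal (∫ x, ‖h x‖ ^ 2) := by
    intro h
    rw [ofReal_integral_eq_lintegral_ofReal]
    · apply lintegral_congr; intro x
      rw [ENNReal.ofReal_pow (norm_nonneg _), ofReal_norm]
    · exact (h.memLp 2).integrable_norm_pow (by norm_num)
    · filter_upwards with x; positivity
  have := SchwartzMap.integral_norm_sq_fourier f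
  rw [key f, ← this, ← key (𝓕 f)]
  rfl

lemma prod_bound : ∃ K : ℝ≥0∞, K ≠ ⊤ ∧ ∀ f g : SchwartzMap (E 2) ℂ,
    ∫⁻ ξ, ‖ξ‖ₑ⁻¹ * ‖𝓕 (fun x => f x * g x) ξ‖ₑ ^ 2 ≤
      K * (∫⁻ ζ, ‖ζ‖ₑ * ‖𝓕 (f : E 2 → ℂ) ζ‖ₑ ^ 2) * (∫⁻ x, ‖g x‖ₑ ^ 2) := by
  obtain ⟨K, hK, hb⟩ := bilin_bound
  refine ⟨K, hK, fun f g => ?_⟩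
  have mf : ∀ f : SchwartzMap (E 2) ℂ, Measurable (fun ζ => ‖𝓕 (f : E 2 → ℂ) ζ‖ₑ) := fun f =>
    (𝓕 f).continuous.measurable.enorm
  rw [← plancherel_enorm g]
  refine le_trans ?_ (hb _ _ (mf f) (mf g))
  apply lintegral_mono; intro ξ
  simp only
  gcongr
  rw [fourier_prod_eq]
  refine (enorm_integral_le_lintegral_enorm _).trans (le_of_eq ?_)
  simp

section embedding

/-- `emb` as a linear isometry-like measurable equivalence. -/
def embL : (E 2 × ℝ) →ₗ[ℝ] E 3 where
  toFun p := emb p.1 p.2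
  map_add' p q := by
    ext i; fin_cases i <;> simp [emb]
  map_smul' c p := by
    ext i; fin_cases i <;> simp [emb]

def embC : (E 2 × ℝ) →L[ℝ] E 3 := LinearMap.toContinuousLinearMap embL

lemma embC_apply (x : E 2) (t : ℝ) : embC (x, t) = emb x t := rfl

lemma emb_norm_sq (x : E 2) (t : ℝ) : ‖emb x t‖ ^ 2 = ‖x‖ ^ 2 + t ^ 2 := by
  simp [EuclideanSpace.norm_sq_eq, emb, Fin.sum_univ_succ]; ring

lemma emb_inner (x y : E 2) (t s : ℝ) :
    inner ℝ (emb x t) (emb y s) = inner ℝ x y + t * s := by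
  simp [PiLp.inner_apply, emb, Fin.sum_univ_succ]; ring

lemma norm_le_emb (x : E 2) (t : ℝ) : ‖x‖ ≤ ‖emb x t‖ :=
  le_of_sq_le_sq (by rw [emb_norm_sq]; nlinarith [sq_nonneg t]) (norm_nonneg _)

lemma abs_le_emb (x : E 2) (t : ℝ) : |t| ≤ ‖emb x t‖ :=
  le_of_sq_le_sq (by rw [emb_norm_sq, sq_abs]; nlinarith [sq_nonneg ‖x‖]) (norm_nonneg _)

lemma emb_mp : MeasurePreserving (fun p : E 2 × ℝ => emb p.1 p.2) (volume.prod volume) volume := by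
  have h1 := (volume_preserving_piFinSuccAbove (fun _ : Fin 3 => ℝ) 2).symm
  have h2 := PiLp.volume_preserving_toLp (Fin 3)
  have h3 := PiLp.volume_preserving_ofLp (Fin 2)
  have h4 : MeasurePreserving (fun p : E 2 × ℝ => (p.2, (WithLp.ofLp p.1 : Fin 2 → ℝ)))
      (volume.prod volume) (volume.prod volume) := by
    exact (((MeasurePreserving.id (volume : Measure ℝ)).prod h3).comp
      (Measure.measurePreserving_swap))
  have h5 := h2.comp (h1.comp h4)
  suffices h6 : (fun p : E 2 × ℝ => emb p.1 p.2) = (WithLp.toLp 2 ∘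
      ⇑(MeasurableEquiv.piFinSuccAbove (fun _ : Fin 3 => ℝ) 2).symm ∘
      fun p : E 2 × ℝ => (p.2, p.1.ofLp)) from by
    rw [h6]; exact h5
  funext p
  apply PiLp.ext
  intro i
  fin_cases i <;> simp [emb, MeasurableEquiv.piFinSuccAbove] <;> rfl

end embedding

lemma emb_me : MeasurableEmbedding (fun p : E 2 × ℝ => emb p.1 p.2) := by
  have hinj : Function.Injective embL := by
    rw [← LinearMap.ker_eq_bot, LinearMap.ker_eq_bot']
    rintro ⟨x, t⟩ h
    have h' : emb x t = 0 := h
    have h2 := emb_norm_sq x t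
    rw [h', norm_zero] at h2
    have hx : ‖x‖ = 0 := by nlinarith [sq_nonneg ‖x‖, sq_nonneg t]
    have ht : t = 0 := by nlinarith [sq_nonneg ‖x‖, sq_nonneg t]
    simp [norm_eq_zero.1 hx, ht]
  exact (LinearMap.isClosedEmbedding_of_injective (LinearMap.ker_eq_bot.2 hinj)).measurableEmbedding

lemma emb_contDiff : ContDiff ℝ (⊤ : ℕ∞) (fun p : E 2 × ℝ => emb p.1 p.2) := embC.contDiff

lemma supp_radius {c : E 3 → ℂ} (hs : HasCompactSupport c) :
    ∃ R : ℝ, 0 < R ∧ ∀ v, R < ‖v‖ → c v = 0 := by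
  obtain ⟨R, hR⟩ := hs.isCompact.isBounded.subset_closedBall (0 : E 3)
  refine ⟨max R 1, by positivity, fun v hv => ?_⟩
  by_contra h
  have := hR (subset_tsupport _ h)
  simp at this
  exact absurd (this.trans (le_max_left _ _)) (not_le.2 hv)

lemma slice_contDiff {c : E 3 → ℂ} (hc : ContDiff ℝ (⊤ : ℕ∞) c) (t : ℝ) :
    ContDiff ℝ (⊤ : ℕ∞) (fun x : E 2 => c (emb x t)) :=
  hc.comp (emb_contDiff.comp (contDiff_id.prodMk contDiff_const))

lemma slice_supp {c : E 3 → ℂ} (hs : HasCompactSupport c) (t : ℝ) :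
    HasCompactSupport (fun x : E 2 => c (emb x t)) := by
  obtain ⟨R, hR, h⟩ := supp_radius hs
  refine HasCompactSupport.intro (isCompact_closedBall (0 : E 2) R) fun x hx => ?_
  apply h
  simp at hx
  exact hx.trans_le (norm_le_emb x t)

/-- slice as a Schwartz map -/
def sl (c : E 3 → ℂ) (hc : ContDiff ℝ (⊤ : ℕ∞) c) (hs : HasCompactSupport c) (t : ℝ) :
    SchwartzMap (E 2) ℂ := (slice_supp hs t).toSchwartzMap (slice_contDiff hc t)

lemma sl_coe (c : E 3 → ℂ) (hc : ContDiff ℝ (⊤ : ℕ∞) c) (hs : HasCompactSupport c) (t : ℝ) :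
    (sl c hc hs t : E 2 → ℂ) = fun x => c (emb x t) := rfl

/-- horizontal Fourier transform -/
def FH (c : E 3 → ℂ) (t : ℝ) (ξ : E 2) : ℂ := 𝓕 (fun x : E 2 => c (emb x t)) ξ

lemma FH_zero {c : E 3 → ℂ} {R : ℝ} (h : ∀ v, R < ‖v‖ → c v = 0) (t : ℝ) (ht : R < |t|)
    (ξ : E 2) : FH c t ξ = 0 := by
  have : (fun x : E 2 => c (emb x t)) = fun _ => 0 := by
    ext x; exact h _ (ht.trans_le (abs_le_emb x t))
  rw [FH, this, Real.fourier_eq]; simp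

lemma FH_contDiff {c : E 3 → ℂ} (hc : ContDiff ℝ (⊤ : ℕ∞) c) (hs : HasCompactSupport c) (ξ : E 2) :
    ContDiff ℝ (⊤ : ℕ∞) (fun t => FH c t ξ) := by
  obtain ⟨R, hR, h⟩ := supp_radius hs
  have hcont : Continuous (fun y : E 2 => ((𝐞 (inner ℝ y ξ) : Circle) : ℂ)) := by
    have := Real.continuous_fourierChar
    fun_prop
  have := contDiffOn_convolution_right_with_param_comp (μ := (volume : Measure (E 2)))
    (n := (⊤ : ℕ∞)) (ContinuousLinearMap.mul ℝ ℂ) (s := Set.univ)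
    (v := fun _ : ℝ => (0 : E 2)) contDiffOn_const
    (f := fun y : E 2 => ((𝐞 (inner ℝ y ξ) : Circle) : ℂ))
    (g := fun (t : ℝ) (x : E 2) => c (emb x t)) (k := Metric.closedBall 0 R)
    isOpen_univ (isCompact_closedBall _ _)
    (fun t x _ hx => h _ (by simp at hx; exact hx.trans_le (norm_le_emb x t)))
    hcont.locallyIntegrable
    (hc.comp (emb_contDiff.comp (contDiff_snd.prodMk contDiff_fst))).contDiffOn
  rw [contDiffOn_univ] at this
  convert this using 2 with t
  rw [FH, Real.fourier_eq, convolution, ← integral_neg_eq_self]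
  simp [Circle.smul_def]

lemma FH_supp {c : E 3 → ℂ} (hs : HasCompactSupport c) (ξ : E 2) :
    HasCompactSupport (fun t => FH c t ξ) := by
  obtain ⟨R, hR, h⟩ := supp_radius hs
  refine HasCompactSupport.intro (isCompact_closedBall (0 : ℝ) R) fun x hx => ?_
  apply FH_zero h
  simpa using hx

lemma fourier3 {c : E 3 → ℂ} (hc : ContDiff ℝ (⊤ : ℕ∞) c) (hs : HasCompactSupport c)
    (ξ : E 2) (τ : ℝ) : 𝓕 c (emb ξ τ) = 𝓕 (fun t => FH c t ξ) τ := by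
  have hint : Integrable (fun v : E 3 => 𝐞 (-inner ℝ v (emb ξ τ)) • c v) :=
    (Real.fourierIntegral_convergent_iff _).2 (hc.continuous.integrable_of_hasCompactSupport hs)
  have hint2 := (emb_mp.integrable_comp_emb emb_me).2 hint
  simp only [Function.comp_def] at hint2
  rw [Real.fourier_eq, ← emb_mp.integral_comp emb_me, integral_prod_symm _ hint2, Real.fourier_eq]
  congr 1; ext t
  simp only [FH, Real.fourier_eq]
  rw [Circle.smul_def, ← integral_smul]
  congr 1; ext x
  rw [emb_inner, neg_add, AddChar.map_add_eq_mul]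
  simp [Circle.smul_def]
  rw [mul_comm τ t]
  ring

lemma FH_measurable {c : E 3 → ℂ} (hc : ContDiff ℝ (⊤ : ℕ∞) c) :
    Measurable (fun p : ℝ × E 2 => FH c p.1 p.2) := by
  have hcont : Continuous (fun q : (ℝ × E 2) × E 2 =>
      𝐞 (-inner ℝ q.2 q.1.2) • c (emb q.2 q.1.1)) := by
    have := Real.continuous_fourierChar
    have h2 : Continuous (fun q : (ℝ × E 2) × E 2 => c (emb q.2 q.1.1)) :=
      hc.continuous.comp (emb_contDiff.continuous.comp
        (continuous_snd.prodMk (continuous_fst.comp continuous_fst)))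
    exact (this.comp (by fun_prop)).smul h2
  exact (hcont.stronglyMeasurable.integral_prod_right).measurable

lemma decay {c : E 3 → ℂ} (hc : ContDiff ℝ (⊤ : ℕ∞) c) (hs : HasCompactSupport c) :
    ∃ M : ℝ, 0 ≤ M ∧ ∀ t ξ, ‖FH c t ξ‖ ≤ M * ((1 + ‖ξ‖) ^ 3)⁻¹ := by
  let C : SchwartzMap (E 3) ℂ := hs.toSchwartzMap hc
  obtain ⟨M0, hM0⟩ : ∃ M0 : ℝ, ∀ v, (1 + ‖v‖) ^ 5 * ‖𝓕 c v‖ ≤ M0 := by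
    refine ⟨2 ^ 5 * (Finset.Iic ((5, 0) : ℕ × ℕ)).sup
      (fun m => SchwartzMap.seminorm ℝ m.1 m.2) (𝓕 C), fun v => ?_⟩
    have := SchwartzMap.one_add_le_sup_seminorm_apply (𝕜 := ℝ) (m := (5, 0)) (k := 5) (n := 0)
      le_rfl le_rfl (𝓕 C) v
    rw [norm_iteratedFDeriv_zero, SchwartzMap.fourier_coe] at this
    exact this
  have hM0p : 0 ≤ M0 := le_trans (by positivity) (hM0 0)
  have hI : Integrable (fun τ : ℝ => (1 + ‖τ‖) ^ (-2:ℝ)) :=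
    integrable_one_add_norm (by simp)
  refine ⟨M0 * ∫ τ : ℝ, (1 + ‖τ‖) ^ (-2:ℝ), ?_, fun t ξ => ?_⟩
  · exact mul_nonneg hM0p (integral_nonneg fun τ => by positivity)
  let H : SchwartzMap ℝ ℂ := (FH_supp hs ξ).toSchwartzMap (FH_contDiff hc hs ξ)
  have hinv : FH c t ξ = 𝓕⁻ (𝓕 (fun t => FH c t ξ)) t := by
    have h1 : (𝓕⁻ (𝓕 H)) t = H t := by simp
    rw [SchwartzMap.fourierInv_coe, SchwartzMap.fourier_coe] at h1
    exact h1.symm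
  rw [hinv, Real.fourierInv_eq]
  calc _ ≤ ∫ τ : ℝ, (M0 * ((1 + ‖ξ‖) ^ 3)⁻¹) * (1 + ‖τ‖) ^ (-2:ℝ) := by
        apply norm_integral_le_of_norm_le (hI.const_mul _)
        filter_upwards with τ
        rw [Circle.norm_smul, ← fourier3 hc hs]
        have h5 := hM0 (emb ξ τ)
        have e1 := norm_le_emb ξ τ
        have e2 := abs_le_emb ξ τ
        rw [Real.rpow_neg (by positivity), Real.rpow_two, mul_assoc, ← mul_inv,
          ← div_eq_mul_inv, le_div_iff₀ (by positivity)]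
        refine le_trans ?_ h5
        rw [mul_comm]
        gcongr
        calc (1 + ‖ξ‖) ^ 3 * (1 + ‖τ‖) ^ 2 ≤ (1 + ‖emb ξ τ‖) ^ 3 * (1 + ‖emb ξ τ‖) ^ 2 := by
              gcongr
              simpa using e2
          _ = _ := by ring
    _ = _ := by rw [integral_const_mul]; ring

/-- squared horizontal half-norm -/
def NH (c : E 3 → ℂ) (t : ℝ) : ℝ≥0∞ := ∫⁻ ξ : E 2, ‖ξ‖ₑ * ‖FH c t ξ‖ₑ ^ 2

lemma NH_measurable {c : E 3 → ℂ} (hc : ContDiff ℝ (⊤ : ℕ∞) c) : Measurable (NH c) := by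
  have := FH_measurable hc
  apply Measurable.lintegral_prod_right' (f := fun p : ℝ × E 2 => ‖p.2‖ₑ * ‖FH c p.1 p.2‖ₑ ^ 2)
  fun_prop

lemma NH_bound {c : E 3 → ℂ} (hc : ContDiff ℝ (⊤ : ℕ∞) c) (hs : HasCompactSupport c) :
    ∃ M : ℝ≥0∞, M ≠ ⊤ ∧ ∀ t, NH c t ≤ M := by
  obtain ⟨M, hM0, hM⟩ := decay hc hs
  have hI : Integrable (fun ξ : E 2 => M ^ 2 * (1 + ‖ξ‖) ^ (-5:ℝ)) :=
    (integrable_one_add_norm (by simp; norm_num)).const_mul _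
  refine ⟨∫⁻ ξ : E 2, ‖M ^ 2 * (1 + ‖ξ‖) ^ (-5:ℝ)‖ₑ, hI.2.ne, fun t => ?_⟩
  apply lintegral_mono; intro ξ
  simp only
  rw [← enorm_norm ξ, ← enorm_norm (FH c t ξ), ← enorm_pow, ← enorm_mul]
  rw [enorm_le_iff_norm_le, Real.norm_of_nonneg (by positivity), Real.norm_of_nonneg (by positivity)]
  calc ‖ξ‖ * ‖FH c t ξ‖ ^ 2 ≤ (1 + ‖ξ‖) * (M * ((1 + ‖ξ‖) ^ 3)⁻¹) ^ 2 := by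
        gcongr
        · linarith
        · exact hM t ξ
    _ = _ := by
        have : 0 < 1 + ‖ξ‖ := by positivity
        rw [Real.rpow_neg this.le]
        have h5 : (1 + ‖ξ‖) ^ (5:ℝ) = (1 + ‖ξ‖) ^ 5 := by norm_cast
        rw [h5]
        field_simp

lemma NH_int {c : E 3 → ℂ} (hc : ContDiff ℝ (⊤ : ℕ∞) c) (hs : HasCompactSupport c) :
    ∫⁻ t, NH c t ≠ ⊤ := by
  obtain ⟨M, hM0, hM⟩ := NH_bound hc hs
  obtain ⟨R, hR, h⟩ := supp_radius hs
  have : ∫⁻ t, NH c t ≤ ∫⁻ t, Set.indicator (Set.Icc (-R) R) (fun _ => M) t := by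
    apply lintegral_mono; intro t
    by_cases ht : t ∈ Set.Icc (-R) R
    · simp [ht, hM]
    · have : R < |t| := by
        by_contra h'
        exact ht (abs_le.1 (not_lt.1 h'))
      simp [ht, NH, FH_zero h t this]
  refine (this.trans_lt ?_).ne
  rw [lintegral_indicator measurableSet_Icc, setLIntegral_const]
  exact ENNReal.mul_lt_top hM0.lt_top (by simp)

lemma FH_meas_slice {c : E 3 → ℂ} (hc : ContDiff ℝ (⊤ : ℕ∞) c) (t : ℝ) :
    Measurable (FH c t) := by
  have h1 : Measurable (fun ξ : E 2 => (t, ξ)) := measurable_const.prodMk measurable_id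
  have h2 := (FH_measurable hc).comp h1
  exact h2

lemma hNorm_sq {c : E 3 → ℂ} (hc : ContDiff ℝ (⊤ : ℕ∞) c) (t : ℝ) :
    (hNorm 2 (1/2) (fun xh : E 2 => c (emb xh t))) ^ 2 = (NH c t).toReal := by
  have hm := FH_meas_slice hc t
  rw [hNorm, ← Real.sqrt_eq_rpow, Real.sq_sqrt (integral_nonneg fun ξ => by positivity)]
  rw [integral_eq_lintegral_of_nonneg_ae]
  · congr 1
    apply lintegral_congr; intro ξ
    rw [ENNReal.ofReal_mul (by positivity), ENNReal.ofReal_pow (by positivity), ofReal_norm]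
    norm_num
    rfl
  · filter_upwards with ξ; positivity
  · change AEStronglyMeasurable (fun ξ : E 2 => ‖ξ‖ ^ (2 * (1/2) : ℝ) * ‖FH c t ξ‖ ^ 2) volume
    apply Measurable.aestronglyMeasurable
    fun_prop

lemma hNorm_nonneg (d : ℕ) (s : ℝ) (f : E d → ℂ) : 0 ≤ hNorm d s f := by
  rw [hNorm]
  exact Real.rpow_nonneg (integral_nonneg fun ξ => by positivity) _

lemma hNorm_bdd {c : E 3 → ℂ} (hc : ContDiff ℝ (⊤ : ℕ∞) c) (hs : HasCompactSupport c) :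
    BddAbove (Set.range fun t : ℝ => hNorm 2 (1/2) (fun xh : E 2 => c (emb xh t))) := by
  obtain ⟨M, hM0, hM⟩ := NH_bound hc hs
  refine ⟨√ M.toReal, ?_⟩
  rintro _ ⟨t, rfl⟩
  apply Real.le_sqrt_of_sq_le
  simp only
  rw [hNorm_sq hc]
  exact ENNReal.toReal_mono hM0 (hM t)

lemma NH_le_sup {c : E 3 → ℂ} (hc : ContDiff ℝ (⊤ : ℕ∞) c) (hs : HasCompactSupport c) (t : ℝ) :
    NH c t ≤ ENNReal.ofReal
      ((⨆ t : ℝ, hNorm 2 (1/2) (fun xh : E 2 => c (emb xh t))) ^ 2) := by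
  obtain ⟨M, hM0, hM⟩ := NH_bound hc hs
  have hfin : NH c t ≠ ⊤ := ((hM t).trans_lt hM0.lt_top).ne
  rw [← ENNReal.ofReal_toReal hfin, ← hNorm_sq hc]
  apply ENNReal.ofReal_le_ofReal
  gcongr
  · exact hNorm_nonneg _ _ _
  · exact le_ciSup (hNorm_bdd hc hs) t

lemma vertical {P : E 3 → ℂ} (hc : ContDiff ℝ (⊤ : ℕ∞) P) (hs : HasCompactSupport P) :
    ∫⁻ v, ‖v‖ₑ⁻¹ * ‖𝓕 P v‖ₑ ^ 2 ≤ ∫⁻ t, ∫⁻ ξ, ‖ξ‖ₑ⁻¹ * ‖FH P t ξ‖ₑ ^ 2 := by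
  have hm := FH_measurable hc
  have hcF : Continuous (𝓕 P) := (𝓕 (hs.toSchwartzMap hc)).continuous
  have hemb := emb_contDiff.continuous.measurable
  rw [← emb_mp.lintegral_comp_emb emb_me, lintegral_prod _ (by
    have := hcF.measurable
    fun_prop)]
  have hsw : ∫⁻ t, ∫⁻ ξ, ‖ξ‖ₑ⁻¹ * ‖FH P t ξ‖ₑ ^ 2 = ∫⁻ ξ, ∫⁻ t, ‖ξ‖ₑ⁻¹ * ‖FH P t ξ‖ₑ ^ 2 :=
    lintegral_lintegral_swap (by
      apply Measurable.aemeasurable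
      apply Measurable.mul
      · fun_prop
      · exact hm.enorm.pow_const 2)
  rw [hsw]
  apply lintegral_mono; intro ξ
  simp only
  calc _ ≤ ∫⁻ τ : ℝ, ‖ξ‖ₑ⁻¹ * ‖𝓕 (fun t => FH P t ξ) τ‖ₑ ^ 2 := by
        apply lintegral_mono; intro τ
        simp only
        rw [fourier3 hc hs]
        gcongr
        rw [enorm_le_iff_norm_le]
        exact norm_le_emb ξ τ
    _ = ‖ξ‖ₑ⁻¹ * ∫⁻ τ : ℝ, ‖𝓕 (fun t => FH P t ξ) τ‖ₑ ^ 2 := by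
        rw [lintegral_const_mul]
        have : Continuous (𝓕 (fun t => FH P t ξ)) :=
          (𝓕 ((FH_supp hs ξ).toSchwartzMap (FH_contDiff hc hs ξ))).continuous
        have := this.measurable
        fun_prop
    _ = ‖ξ‖ₑ⁻¹ * ∫⁻ t : ℝ, ‖FH P t ξ‖ₑ ^ 2 := by
        congr 1
        exact plancherel_enorm ((FH_supp hs ξ).toSchwartzMap (FH_contDiff hc hs ξ))
    _ = _ := by
        rw [lintegral_const_mul]
        fun_prop

/-- vertical derivative -/
def d3 (b : E 3 → ℂ) : E 3 → ℂ := fun v => fderiv ℝ b v (EuclideanSpace.single 2 1)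

lemma d3_contDiff {b : E 3 → ℂ} (hb : ContDiff ℝ (⊤ : ℕ∞) b) : ContDiff ℝ (⊤ : ℕ∞) (d3 b) := by
  have : ContDiff ℝ (⊤ : ℕ∞) (fderiv ℝ b) := hb.fderiv_right (by simp)
  exact this.clm_apply contDiff_const

lemma d3_supp {b : E 3 → ℂ} (hs : HasCompactSupport b) : HasCompactSupport (d3 b) :=
  hs.fderiv_apply ℝ _

lemma emb_hasDerivAt (x : E 2) (s : ℝ) :
    HasDerivAt (fun s => emb x s) (EuclideanSpace.single 2 1) s := by
  have h : (fun s => emb x s) = fun s => emb x 0 + s • (EuclideanSpace.single 2 1 : E 3) := by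
    funext s
    apply PiLp.ext
    intro i
    fin_cases i <;> simp [emb]
  rw [h]
  simpa using ((hasDerivAt_id s).smul_const (EuclideanSpace.single 2 1 : E 3)).const_add (emb x 0)

lemma ftc {b : E 3 → ℂ} (hb : ContDiff ℝ (⊤ : ℕ∞) b) (x : E 2) (t : ℝ) :
    ∫ s in (0:ℝ)..t, d3 b (emb x s) = b (emb x t) - b (emb x 0) := by
  apply intervalIntegral.integral_eq_sub_of_hasDerivAt
  · intro s _
    have h1 : HasFDerivAt b (fderiv ℝ b (emb x s)) (emb x s) :=
      (hb.differentiable (by simp) _).hasFDerivAt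
    exact h1.comp_hasDerivAt s (emb_hasDerivAt x s)
  · apply Continuous.intervalIntegrable
    exact (d3_contDiff hb).continuous.comp 
      (continuous_iff_continuousAt.2 fun s => (emb_hasDerivAt x s).continuousAt)

lemma diff_fourier {b : E 3 → ℂ} (hb : ContDiff ℝ (⊤ : ℕ∞) b) (hs : HasCompactSupport b)
    (t : ℝ) (ξ : E 2) :
    ‖𝓕 (fun x : E 2 => b (emb x t) - b (emb x 0)) ξ‖ₑ ≤
      ∫⁻ s in Set.uIoc 0 t, ‖FH (d3 b) s ξ‖ₑ := by
  have hcd := d3_contDiff hb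
  have hsd := d3_supp hs
  have hint0 : Integrable (fun v : E 3 => d3 b v) :=
    hcd.continuous.integrable_of_hasCompactSupport hsd
  have hint : Integrable (fun p : E 2 × ℝ => 𝐞 (-inner ℝ p.1 ξ) • d3 b (emb p.1 p.2))
      (volume.prod (volume.restrict (Set.uIoc 0 t))) := by
    have h1 := (emb_mp.integrable_comp_emb emb_me).2 hint0
    have h2 : Integrable (fun p : E 2 × ℝ => d3 b (emb p.1 p.2))
        (volume.prod (volume.restrict (Set.uIoc 0 t))) := by
      refine Integrable.mono_measure h1 ?_
      exact Measure.prod_mono le_rfl Measure.restrict_le_self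
    refine h2.mono ?_ ?_
    · apply Continuous.aestronglyMeasurable
      exact (Real.continuous_fourierChar.comp (by fun_prop)).smul
        (hcd.continuous.comp emb_contDiff.continuous)
    · filter_upwards with p; simp
  have e1 : 𝓕 (fun x : E 2 => b (emb x t) - b (emb x 0)) ξ =
      ∫ x : E 2, ∫ s in (0:ℝ)..t, 𝐞 (-inner ℝ x ξ) • d3 b (emb x s) := by
    rw [Real.fourier_eq]
    congr 1; ext x
    rw [← ftc hb x t, Circle.smul_def, ← intervalIntegral.integral_smul]
    rfl
  have e2 : ‖𝓕 (fun x : E 2 => b (emb x t) - b (emb x 0)) ξ‖ₑ =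
      ‖∫ s in Set.uIoc 0 t, FH (d3 b) s ξ‖ₑ := by
    rw [e1]
    simp only [intervalIntegral.intervalIntegral_eq_integral_uIoc]
    rw [integral_smul, integral_integral_swap hint]
    have : ∀ z : ℂ, ‖(if (0:ℝ) ≤ t then (1:ℝ) else -1) • z‖ₑ = ‖z‖ₑ := by
      intro z; split_ifs <;> simp
    rw [this]
    simp only [FH, Real.fourier_eq]
  rw [e2]
  exact enorm_integral_le_lintegral_enorm _

lemma diff_bound {b : E 3 → ℂ} (hb : ContDiff ℝ (⊤ : ℕ∞) b) (hs : HasCompactSupport b)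
    (t : ℝ) {S : ℝ≥0∞} (hS : ∀ s, NH (d3 b) s ≤ S) :
    ∫⁻ ξ : E 2, ‖ξ‖ₑ * ‖𝓕 (fun x : E 2 => b (emb x t) - b (emb x 0)) ξ‖ₑ ^ 2 ≤
      ENNReal.ofReal (t ^ 2) * S := by
  have hm := FH_measurable (d3_contDiff hb)
  have hvol : volume (Set.uIoc 0 t) = ENNReal.ofReal |t| := by
    simp [Set.uIoc]; rcases le_total 0 t with h | h <;> simp [h, abs_of_nonneg, abs_of_nonpos]
  have hm2 : Measurable (fun p : E 2 × ℝ => ‖p.1‖ₑ * ‖FH (d3 b) p.2 p.1‖ₑ ^ 2) := by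
    have h7 : Measurable (fun p : E 2 × ℝ => ‖FH (d3 b) p.2 p.1‖ₑ ^ 2) :=
      (hm.comp measurable_swap).enorm.pow_const 2
    exact measurable_fst.enorm.mul h7
  calc _ ≤ ∫⁻ ξ : E 2, ENNReal.ofReal |t| *
        ∫⁻ s in Set.uIoc 0 t, ‖ξ‖ₑ * ‖FH (d3 b) s ξ‖ₑ ^ 2 := by
        apply lintegral_mono; intro ξ
        have hmξ : Measurable (fun s => ‖FH (d3 b) s ξ‖ₑ) :=
          ((FH_contDiff (d3_contDiff hb) (d3_supp hs) ξ).continuous.measurable).enorm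
        have cs := cs_sq (volume.restrict (Set.uIoc 0 t)) (u := fun s => ‖FH (d3 b) s ξ‖ₑ)
          (v := fun _ => 1) hmξ.aemeasurable (by fun_prop)
        simp only [mul_one, one_pow, lintegral_const, one_mul, Measure.restrict_apply_univ,
          hvol] at cs
        simp only
        rw [lintegral_const_mul _ (by fun_prop)]
        calc _ ≤ ‖ξ‖ₑ * (∫⁻ s in Set.uIoc 0 t, ‖FH (d3 b) s ξ‖ₑ) ^ 2 := by
              gcongr; exact diff_fourier hb hs t ξ
          _ ≤ ‖ξ‖ₑ * ((∫⁻ s in Set.uIoc 0 t, ‖FH (d3 b) s ξ‖ₑ ^ 2) * ENNReal.ofReal |t|) := by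
              gcongr
          _ = _ := by ring
    _ = ENNReal.ofReal |t| * ∫⁻ s in Set.uIoc 0 t, NH (d3 b) s := by
        rw [lintegral_const_mul, lintegral_lintegral_swap]
        · rfl
        · exact hm2.aemeasurable
        · exact hm2.lintegral_prod_right'
    _ ≤ ENNReal.ofReal |t| * ∫⁻ s in Set.uIoc 0 t, S := by
        gcongr with s; exact hS s
    _ = _ := by
        rw [setLIntegral_const, hvol, ← sq_abs, ENNReal.ofReal_pow (abs_nonneg _)]; ring

lemma slice_bound {K : ℝ≥0∞} (hK : ∀ f g : SchwartzMap (E 2) ℂ,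
    ∫⁻ ξ, ‖ξ‖ₑ⁻¹ * ‖𝓕 (fun x => f x * g x) ξ‖ₑ ^ 2 ≤
      K * (∫⁻ ζ, ‖ζ‖ₑ * ‖𝓕 (f : E 2 → ℂ) ζ‖ₑ ^ 2) * (∫⁻ x, ‖g x‖ₑ ^ 2))
    {a b : E 3 → ℂ} (ha : ContDiff ℝ (⊤ : ℕ∞) a) (has : HasCompactSupport a)
    (hb : ContDiff ℝ (⊤ : ℕ∞) b) (hbs : HasCompactSupport b)
    {S : ℝ≥0∞} (hS : ∀ s, NH (d3 b) s ≤ S) (t : ℝ) :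
    ∫⁻ ξ, ‖ξ‖ₑ⁻¹ * ‖FH (fun v => a v * b v) t ξ‖ₑ ^ 2 ≤
      2 * K * (NH a t * (∫⁻ x, ‖b (emb x 0)‖ₑ ^ 2) +
        S * ∫⁻ x : E 2, ENNReal.ofReal (t ^ 2) * ‖a (emb x t)‖ₑ ^ 2) := by
  let A := sl a ha has t
  let B0 := sl b hb hbs 0
  let D := sl b hb hbs t - sl b hb hbs 0
  have hDc : (D : E 2 → ℂ) = fun x => b (emb x t) - b (emb x 0) := rfl
  have h1 := hK A B0
  have h2 := hK D A
  have hD := diff_bound hb hbs t hS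
  have hcA : Continuous fun x => A x := A.continuous
  have hcB : Continuous fun x => B0 x := B0.continuous
  have hi1 : Integrable (fun x => A x * B0 x) := by
    apply Continuous.integrable_of_hasCompactSupport
    · exact A.continuous.mul B0.continuous
    · exact (slice_supp has t).mul_right
  have hi2 : Integrable (fun x => D x * A x) := by
    apply Continuous.integrable_of_hasCompactSupport
    · exact D.continuous.mul A.continuous
    · exact (slice_supp has t).mul_left
  have hsplit : ∀ ξ, FH (fun v => a v * b v) t ξ =
      𝓕 (fun x => A x * B0 x) ξ + 𝓕 (fun x => D x * A x) ξ := by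
    intro ξ
    simp only [FH, Real.fourier_eq]
    rw [← integral_add]
    · congr 1; ext x
      rw [← smul_add]
      congr 1
      change a (emb x t) * b (emb x t) = a (emb x t) * b (emb x 0) +
        (b (emb x t) - b (emb x 0)) * a (emb x t)
      ring
    · exact (Real.fourierIntegral_convergent_iff ξ).2 hi1
    · exact (Real.fourierIntegral_convergent_iff ξ).2 hi2
  have hmF : ∀ f : E 2 → ℂ, Integrable f → Measurable (fun ξ => ‖ξ‖ₑ⁻¹ * ‖𝓕 f ξ‖ₑ ^ 2) := by
    intro f hf
    have : Continuous (𝓕 f) := VectorFourier.fourierIntegral_continuous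
      Real.continuous_fourierChar continuous_inner hf
    have := this.measurable
    fun_prop
  calc _ ≤ ∫⁻ ξ : E 2, (2 * (‖ξ‖ₑ⁻¹ * ‖𝓕 (fun x => A x * B0 x) ξ‖ₑ ^ 2) +
        2 * (‖ξ‖ₑ⁻¹ * ‖𝓕 (fun x => D x * A x) ξ‖ₑ ^ 2)) := by
        apply lintegral_mono; intro ξ
        simp only
        rw [hsplit]
        calc _ ≤ ‖ξ‖ₑ⁻¹ * (‖𝓕 (fun x => A x * B0 x) ξ‖ₑ + ‖𝓕 (fun x => D x * A x) ξ‖ₑ) ^ 2 := by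
              gcongr; exact enorm_add_le _ _
          _ ≤ ‖ξ‖ₑ⁻¹ * (2 * (‖𝓕 (fun x => A x * B0 x) ξ‖ₑ ^ 2 +
                ‖𝓕 (fun x => D x * A x) ξ‖ₑ ^ 2)) := by
              gcongr; exact ennreal_add_sq_le _ _
          _ = _ := by ring
    _ = 2 * (∫⁻ ξ : E 2, ‖ξ‖ₑ⁻¹ * ‖𝓕 (fun x => A x * B0 x) ξ‖ₑ ^ 2) +
        2 * (∫⁻ ξ : E 2, ‖ξ‖ₑ⁻¹ * ‖𝓕 (fun x => D x * A x) ξ‖ₑ ^ 2) := by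
        rw [lintegral_add_left ((hmF _ hi1).const_mul 2), lintegral_const_mul _ (hmF _ hi1),
          lintegral_const_mul _ (hmF _ hi2)]
    _ ≤ 2 * (K * NH a t * (∫⁻ x, ‖b (emb x 0)‖ₑ ^ 2)) +
        2 * (K * (ENNReal.ofReal (t ^ 2) * S) * ∫⁻ x : E 2, ‖a (emb x t)‖ₑ ^ 2) := by
        refine add_le_add (mul_le_mul_right h1 2) (mul_le_mul_right (h2.trans ?_) 2)
        exact mul_le_mul_left (mul_le_mul_right hD K) _
    _ = _ := by
        rw [lintegral_const_mul]
        · ring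
        · exact (slice_contDiff ha t).continuous.measurable.enorm.pow_const 2

lemma sqrt_combine {L X1 β X S k : ℝ} (hX1 : 0 ≤ X1) (hβ : 0 ≤ β) (hX : 0 ≤ X) (hS : 0 ≤ S)
    (hk : 0 ≤ k) (h : L ≤ k * (X1 * β + S ^ 2 * X)) :
    √L ≤ (√k + 1) * √X1 * √β + (√k + 1) * √X * S := by
  have h1 : √L ≤ √k * √X1 * √β + √k * √X * S := by
    apply Real.sqrt_le_iff.2 ⟨by positivity, h.trans ?_⟩
    have e1 := Real.sq_sqrt hX1
    have e2 := Real.sq_sqrt hβ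
    have e3 := Real.sq_sqrt hX
    have e4 := Real.sq_sqrt hk
    have : (√k * √X1 * √β + √k * √X * S) ^ 2 = k * (X1 * β + S ^ 2 * X) +
        2 * (√k * √X1 * √β) * (√k * √X * S) := by
      calc _ = √k ^ 2 * (√X1 ^ 2 * √β ^ 2 + S ^ 2 * √X ^ 2) +
            2 * (√k * √X1 * √β) * (√k * √X * S) := by ring
        _ = _ := by rw [e1, e2, e3, e4]
    rw [this]
    have : 0 ≤ 2 * (√k * √X1 * √β) * (√k * √X * S) := by positivity
    linarith
  have h2 : 0 ≤ √X1 * √β := by positivity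
  have h3 : 0 ≤ √X * S := by positivity
  nlinarith

/-- `‖ab‖_{Ḣ^{-1/2}(ℝ³)} ≤ C ‖a‖_{L²_v Ḣ^{1/2}_h} ‖b(·,0)‖_{L²_h}
+ C ‖x₃ a‖_{L²} ‖∂₃ b‖_{L^∞_v Ḣ^{1/2}_h}` for smooth compactly supported `a, b`. -/
theorem product_trace_half :
    ∃ C > (0:ℝ), ∀ a b : E 3 → ℂ,
      ContDiff ℝ (⊤ : ℕ∞) a → HasCompactSupport a → ContDiff ℝ (⊤ : ℕ∞) b → HasCompactSupport b →
      hNorm 3 (-(1/2)) (fun x => a x * b x) ≤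
        C * (∫ x₃ : ℝ, (hNorm 2 (1/2) (fun xh : E 2 => a (emb xh x₃))) ^ 2) ^ (1/2 : ℝ)
            * (∫ xh : E 2, ‖b (emb xh 0)‖ ^ 2) ^ (1/2 : ℝ)
        + C * (∫ x : E 3, (x 2) ^ 2 * ‖a x‖ ^ 2) ^ (1/2 : ℝ)
            * ⨆ x₃ : ℝ, hNorm 2 (1/2) (fun xh : E 2 =>
                fderiv ℝ b (emb xh x₃) (EuclideanSpace.single 2 1)) := by
  obtain ⟨K, hKt, hK⟩ := prod_bound
  refine ⟨√ (2 * K).toReal + 1, by positivity, fun a b ha has hb hbs => ?_⟩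
  set S : ℝ := ⨆ x₃ : ℝ, hNorm 2 (1/2) (fun xh : E 2 => d3 b (emb xh x₃)) with hSdef
  have hS0 : 0 ≤ S := Real.iSup_nonneg fun t => hNorm_nonneg _ _ _
  have hS := NH_le_sup (d3_contDiff hb) (d3_supp hbs)
  have hP : ContDiff ℝ (⊤ : ℕ∞) (fun v => a v * b v) := ha.mul hb
  have hPs : HasCompactSupport (fun v => a v * b v) := has.mul_right
  have hv := vertical hP hPs
  set X1 : ℝ≥0∞ := ∫⁻ t, NH a t with hX1
  set β : ℝ≥0∞ := ∫⁻ x : E 2, ‖b (emb x 0)‖ₑ ^ 2 with hβ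
  set X : ℝ≥0∞ := ∫⁻ v : E 3, ENNReal.ofReal (v 2 ^ 2) * ‖a v‖ₑ ^ 2 with hX
  have hma := ha.continuous.measurable
  have hemb := emb_contDiff.continuous.measurable
  have hXeq : ∫⁻ t : ℝ, ∫⁻ x : E 2, ENNReal.ofReal (t ^ 2) * ‖a (emb x t)‖ₑ ^ 2 = X := by
    rw [hX, ← emb_mp.lintegral_comp_emb emb_me, lintegral_prod_symm' _ (by fun_prop)]
    rfl
  have hmain : ∫⁻ v : E 3, ‖v‖ₑ⁻¹ * ‖𝓕 (fun v => a v * b v) v‖ₑ ^ 2 ≤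
      2 * K * (X1 * β + ENNReal.ofReal (S ^ 2) * X) := by
    refine hv.trans ?_
    refine (lintegral_mono fun t => slice_bound hK ha has hb hbs hS t).trans (le_of_eq ?_)
    have m1 : Measurable (fun t : ℝ => ∫⁻ x : E 2, ENNReal.ofReal (t ^ 2) * ‖a (emb x t)‖ₑ ^ 2) := by
      apply Measurable.lintegral_prod_right' (f := fun p : ℝ × E 2 =>
        ENNReal.ofReal (p.1 ^ 2) * ‖a (emb p.2 p.1)‖ₑ ^ 2)
      have : Measurable (fun p : ℝ × E 2 => emb p.2 p.1) := hemb.comp measurable_swap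
      fun_prop
    have m2 := NH_measurable ha
    have m3 : Measurable (fun t : ℝ => NH a t * β + ENNReal.ofReal (S ^ 2) *
      ∫⁻ x : E 2, ENNReal.ofReal (t ^ 2) * ‖a (emb x t)‖ₑ ^ 2) :=
      (m2.mul_const _).add (m1.const_mul _)
    change ∫⁻ t : ℝ, 2 * K * (NH a t * β + ENNReal.ofReal (S ^ 2) *
      ∫⁻ x : E 2, ENNReal.ofReal (t ^ 2) * ‖a (emb x t)‖ₑ ^ 2) = _
    rw [lintegral_const_mul _ m3,
      lintegral_add_left (m2.mul_const _), lintegral_mul_const _ m2, lintegral_const_mul _ m1, hXeq]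
  -- finiteness
  have fX1 : X1 ≠ ⊤ := NH_int ha has
  have hβi : Integrable (fun x : E 2 => ‖b (emb x 0)‖ ^ 2) := by
    apply Continuous.integrable_of_hasCompactSupport
    · exact (slice_contDiff hb 0).continuous.norm.pow 2
    · have := (slice_supp hbs 0).norm
      exact this.comp_left (g := fun y : ℝ => y ^ 2) (by simp)
  have hXi : Integrable (fun v : E 3 => (v 2) ^ 2 * ‖a v‖ ^ 2) := by
    apply Continuous.integrable_of_hasCompactSupport
    · have := ha.continuous
      fun_prop
    · have := has.norm.comp_left (g := fun y : ℝ => y ^ 2) (by simp)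
      exact this.mul_left
  have eβ : ENNReal.ofReal (∫ x : E 2, ‖b (emb x 0)‖ ^ 2) = β := by
    rw [ofReal_integral_eq_lintegral_ofReal hβi (by filter_upwards with x; positivity)]
    apply lintegral_congr; intro x
    rw [ENNReal.ofReal_pow (norm_nonneg _), ofReal_norm]
  have eX : ENNReal.ofReal (∫ v : E 3, (v 2) ^ 2 * ‖a v‖ ^ 2) = X := by
    rw [ofReal_integral_eq_lintegral_ofReal hXi (by filter_upwards with x; positivity)]
    apply lintegral_congr; intro x
    rw [ENNReal.ofReal_mul (by positivity), ENNReal.ofReal_pow (norm_nonneg _), ofReal_norm]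
  have eX1 : ∫ x₃ : ℝ, (hNorm 2 (1/2) (fun xh : E 2 => a (emb xh x₃))) ^ 2 = X1.toReal := by
    simp only [hNorm_sq ha]
    apply integral_toReal (NH_measurable ha).aemeasurable
    exact ae_lt_top (NH_measurable ha) fX1
  have fβ : β ≠ ⊤ := by rw [← eβ]; exact ENNReal.ofReal_ne_top
  have fX : X ≠ ⊤ := by rw [← eX]; exact ENNReal.ofReal_ne_top
  have iβ : 0 ≤ ∫ x : E 2, ‖b (emb x 0)‖ ^ 2 := integral_nonneg fun x => by positivity
  have iX : 0 ≤ ∫ v : E 3, (v 2) ^ 2 * ‖a v‖ ^ 2 := integral_nonneg fun x => by positivity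
  have rβ : ∫ x : E 2, ‖b (emb x 0)‖ ^ 2 = β.toReal := by
    rw [← eβ, ENNReal.toReal_ofReal iβ]
  have rX : ∫ v : E 3, (v 2) ^ 2 * ‖a v‖ ^ 2 = X.toReal := by
    rw [← eX, ENNReal.toReal_ofReal iX]
  have hL : ∫ v : E 3, ‖v‖ ^ (2 * (-(1/2)) : ℝ) * ‖𝓕 (fun v => a v * b v) v‖ ^ 2 ≤
      (2 * K).toReal * (X1.toReal * β.toReal + S ^ 2 * X.toReal) := by
    have hcF : Continuous (𝓕 (fun v => a v * b v)) := (𝓕 (hPs.toSchwartzMap hP)).continuous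
    rw [integral_eq_lintegral_of_nonneg_ae (by filter_upwards with x; positivity)
      (by have := hcF.measurable; apply Measurable.aestronglyMeasurable; fun_prop)]
    have hrhs : (2 * K).toReal * (X1.toReal * β.toReal + S ^ 2 * X.toReal) =
        (2 * K * (X1 * β + ENNReal.ofReal (S ^ 2) * X)).toReal := by
      rw [ENNReal.toReal_mul (a := 2 * K), ENNReal.toReal_add (ENNReal.mul_ne_top fX1 fβ)
        (ENNReal.mul_ne_top ENNReal.ofReal_ne_top fX), ENNReal.toReal_mul (a := X1),
        ENNReal.toReal_mul (b := X), ENNReal.toReal_ofReal (by positivity)]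
    rw [hrhs]
    apply ENNReal.toReal_mono
    · refine ENNReal.mul_ne_top (ENNReal.mul_ne_top (by simp) hKt) ?_
      exact ENNReal.add_ne_top.2 ⟨ENNReal.mul_ne_top fX1 fβ,
        ENNReal.mul_ne_top ENNReal.ofReal_ne_top fX⟩
    · refine le_trans (lintegral_mono fun v => ?_) hmain
      rw [ENNReal.ofReal_mul (by positivity), ENNReal.ofReal_pow (norm_nonneg _), ofReal_norm]
      gcongr
      have : (2 * (-(1/2)) : ℝ) = -1 := by norm_num
      rw [this, Real.rpow_neg_one]
      rcases eq_or_ne v 0 with rfl | h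
      · simp
      · rw [ENNReal.ofReal_inv_of_pos (norm_pos_iff.2 h), ofReal_norm]
  have hfin := sqrt_combine ENNReal.toReal_nonneg ENNReal.toReal_nonneg ENNReal.toReal_nonneg hS0
    ENNReal.toReal_nonneg hL
  rw [eX1, rβ, rX]
  simp only [← Real.sqrt_eq_rpow]
  rw [hNorm, ← Real.sqrt_eq_rpow]
  exact hfin
end
end

section
/- Let a, b : ℝ² → ℝ be smooth compactly supported functions. Then ‖ab‖_{Ḣ^{-1/2}(ℝ²)} ≤ C ‖a‖_{Ḣ^{1/2}(ℝ²)} ‖b‖_{L²(ℝ²)} for a universal constant C. -/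
open MeasureTheory Real
open scoped FourierTransform ENNReal

noncomputable section

lemma aux_radial : ∃ K : ℝ≥0∞, K ≠ ⊤ ∧ ∀ x : E 2,
    ∫⁻ ξ in Metric.closedBall (0 : E 2) ‖x‖, ‖ξ‖ₑ⁻¹ ≤ K * ‖x‖ₑ := by
  refine ⟨ENNReal.ofReal (2 * volume.real (Metric.ball (0 : E 2) 1)), ENNReal.ofReal_ne_top, ?_⟩
  intro x
  set r := ‖x‖ with hr
  have hr0 : 0 ≤ r := norm_nonneg x
  let f : ℝ → ℝ := (Set.Iic r).indicator (fun y => y⁻¹)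
  have key : ∀ y ∈ Set.Ioi (0:ℝ), y ^ (Module.finrank ℝ (E 2) - 1) • f y =
      (Set.Ioc 0 r).indicator (fun _ => (1:ℝ)) y := by
    intro y hy
    have hy' : (0:ℝ) < y := hy
    by_cases h : y ≤ r
    · simp [f, h, hy', hy'.ne']
    · simp [f, h]
  have hfint : Integrable (fun ξ : E 2 => f ‖ξ‖) volume := by
    rw [integrable_fun_norm_addHaar (volume : Measure (E 2)) (f := f),
      integrableOn_congr_fun key measurableSet_Ioi]
    apply Integrable.integrableOn
    rw [integrable_indicator_iff measurableSet_Ioc]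
    simp
  have hval : ∫ ξ : E 2, f ‖ξ‖ = 2 * volume.real (Metric.ball (0 : E 2) 1) * r := by
    rw [integral_fun_norm_addHaar (volume : Measure (E 2)) f,
      setIntegral_congr_fun measurableSet_Ioi key, setIntegral_indicator measurableSet_Ioc]
    have : Set.Ioi (0:ℝ) ∩ Set.Ioc 0 r = Set.Ioc 0 r := by
      ext y; simp
    rw [this]
    simp [hr0]
    ring
  have hnn : 0 ≤ᵐ[volume] (fun ξ : E 2 => f ‖ξ‖) := by
    refine .of_forall fun ξ => ?_
    exact Set.indicator_apply_nonneg (fun _ => inv_nonneg.2 (norm_nonneg _))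
  have h2 := ofReal_integral_eq_lintegral_ofReal hfint hnn
  rw [hval, ENNReal.ofReal_mul (by positivity), hr, ofReal_norm] at h2
  rw [h2, ← lintegral_indicator Metric.isClosed_closedBall.measurableSet]
  apply lintegral_mono_ae
  have h0 : ∀ᵐ ξ : E 2, ξ ≠ 0 := by
    simp [ae_iff]
  filter_upwards [h0] with ξ hξ
  by_cases h : ‖ξ‖ ≤ r
  · have : ξ ∈ Metric.closedBall (0 : E 2) ‖x‖ := by simpa using h
    rw [Set.indicator_of_mem this]
    simp only [f, Set.indicator_of_mem (show ‖ξ‖ ∈ Set.Iic r from h)]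
    rw [ENNReal.ofReal_inv_of_pos (norm_pos_iff.2 hξ), ofReal_norm]
  · have : ξ ∉ Metric.closedBall (0 : E 2) ‖x‖ := by simpa using h
    rw [Set.indicator_of_notMem this]
    exact zero_le

lemma aux_cs {α : Type*} [MeasurableSpace α] (μ : Measure α) {f g : α → ℝ≥0∞}
    (hf : AEMeasurable f μ) (hg : AEMeasurable g μ) :
    (∫⁻ x, f x * g x ∂μ) ^ 2 ≤ (∫⁻ x, f x ^ 2 ∂μ) * ∫⁻ x, g x ^ 2 ∂μ := by
  have h := ENNReal.lintegral_mul_le_Lp_mul_Lq μ Real.HolderConjugate.two_two hf hg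
  have h2 := pow_le_pow_left' h 2
  have e : ∀ z : ℝ≥0∞, (z ^ (1/2 : ℝ)) ^ 2 = z := by
    intro z
    rw [← ENNReal.rpow_natCast, ← ENNReal.rpow_mul]; norm_num
  rw [mul_pow, e, e] at h2
  simpa using h2

lemma aux_main {K : ℝ≥0∞} (hK : ∀ x : E 2,
    ∫⁻ ξ in Metric.closedBall (0 : E 2) ‖x‖, ‖ξ‖ₑ⁻¹ ≤ K * ‖x‖ₑ)
    {A B : E 2 → ℝ≥0∞} (hA : Measurable A) (hB : Measurable B)
    (hYt : ∫⁻ η, B η ^ 2 ≠ ⊤) :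
    ∫⁻ ξ, ‖ξ‖ₑ⁻¹ * (∫⁻ η, A η * B (ξ - η)) ^ 2 ≤
      4 * K * (∫⁻ η, ‖η‖ₑ * A η ^ 2) * ∫⁻ η, B η ^ 2 := by
  set X := ∫⁻ η, ‖η‖ₑ * A η ^ 2
  set Y := ∫⁻ η, B η ^ 2
  have hY : ∀ ξ : E 2, ∫⁻ η, B (ξ - η) ^ 2 = Y := fun ξ =>
    lintegral_sub_left_eq_self (μ := (volume : Measure (E 2))) (fun η => B η ^ 2) ξ
  have h0 : ∀ᵐ ξ : E 2, ξ ≠ 0 := by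
    simp [ae_iff]
  let P : E 2 → ℝ≥0∞ := fun ξ => ∫⁻ η, (‖η‖ₑ * A η ^ 2) * B (ξ - η) ^ 2
  let Q : E 2 → ℝ≥0∞ := fun ξ => ∫⁻ η in (Metric.closedBall (0 : E 2) ‖ξ‖)ᶜ, A η ^ 2
  -- low frequency part
  have hI : ∀ ξ : E 2, (∫⁻ η in Metric.closedBall (0 : E 2) ‖ξ‖, A η * B (ξ - η)) ^ 2 ≤
      P ξ * (K * ‖ξ‖ₑ) := by
    intro ξ
    have e1 : ∫⁻ η in Metric.closedBall (0 : E 2) ‖ξ‖, A η * B (ξ - η) =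
        ∫⁻ η in Metric.closedBall (0 : E 2) ‖ξ‖,
          (‖η‖ₑ ^ (1/2 : ℝ) * A η * B (ξ - η)) * (‖η‖ₑ⁻¹ ^ (1/2 : ℝ)) := by
      apply lintegral_congr_ae
      filter_upwards [ae_restrict_of_ae h0] with η hη
      have : ‖η‖ₑ ^ (1/2 : ℝ) * ‖η‖ₑ⁻¹ ^ (1/2 : ℝ) = 1 := by
        rw [← ENNReal.mul_rpow_of_nonneg _ _ (by norm_num),
          ENNReal.mul_inv_cancel (by simpa using hη) (by simp), ENNReal.one_rpow]
      calc A η * B (ξ - η) = (‖η‖ₑ ^ (1/2 : ℝ) * ‖η‖ₑ⁻¹ ^ (1/2 : ℝ)) * (A η * B (ξ - η)) := by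
            rw [this, one_mul]
        _ = _ := by ring
    have e : ∀ z : ℝ≥0∞, (z ^ (1/2 : ℝ)) ^ 2 = z := by
      intro z
      rw [← ENNReal.rpow_natCast, ← ENNReal.rpow_mul]; norm_num
    rw [e1]
    refine (aux_cs _ (by fun_prop) (by fun_prop)).trans ?_
    simp only [mul_pow, e]
    exact mul_le_mul' (setLIntegral_le_lintegral _ _) (hK ξ)
  have hII : ∀ ξ : E 2, (∫⁻ η in (Metric.closedBall (0 : E 2) ‖ξ‖)ᶜ, A η * B (ξ - η)) ^ 2 ≤
      Q ξ * Y := by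
    intro ξ
    refine (aux_cs _ (by fun_prop) (by fun_prop)).trans ?_
    refine mul_le_mul' le_rfl ?_
    rw [← hY ξ]
    exact setLIntegral_le_lintegral _ _
  have hP : ∫⁻ ξ, P ξ = X * Y := by
    simp only [P]
    rw [lintegral_lintegral_swap (by fun_prop)]
    have : ∀ η : E 2, ∫⁻ ξ, ‖η‖ₑ * A η ^ 2 * B (ξ - η) ^ 2 = ‖η‖ₑ * A η ^ 2 * Y := by
      intro η
      rw [lintegral_const_mul _ (by fun_prop),
        lintegral_sub_right_eq_self (μ := (volume : Measure (E 2))) (fun ξ => B ξ ^ 2) η]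
    simp only [this]
    rw [lintegral_mul_const _ (by fun_prop)]
  have hQ : ∫⁻ ξ, ‖ξ‖ₑ⁻¹ * Q ξ ≤ K * X := by
    let S : Set (E 2 × E 2) := {p | ‖p.1‖ < ‖p.2‖}
    have hS : MeasurableSet S := measurableSet_lt (by fun_prop) (by fun_prop)
    have e1 : ∀ ξ, ‖ξ‖ₑ⁻¹ * Q ξ =
        ∫⁻ η, S.indicator (fun p => ‖p.1‖ₑ⁻¹ * A p.2 ^ 2) (ξ, η) := by
      intro ξ
      simp only [Q]
      rw [← lintegral_const_mul _ (by fun_prop),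
        ← lintegral_indicator Metric.isClosed_closedBall.measurableSet.compl]
      congr 1
      ext η
      by_cases h : ‖ξ‖ < ‖η‖
      · simp [S, h]
      · simp [S, h]
    simp only [e1]
    rw [lintegral_lintegral_swap]
    swap
    · exact (Measurable.indicator (by fun_prop) hS).aemeasurable
    simp only [X]
    rw [← lintegral_const_mul _ (by fun_prop)]
    apply lintegral_mono
    intro η
    calc ∫⁻ ξ, S.indicator (fun p => ‖p.1‖ₑ⁻¹ * A p.2 ^ 2) (ξ, η)
        ≤ ∫⁻ ξ, (Metric.closedBall (0 : E 2) ‖η‖).indicator (fun ξ => ‖ξ‖ₑ⁻¹ * A η ^ 2) ξ := by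
          apply lintegral_mono
          intro ξ
          by_cases h : ‖ξ‖ < ‖η‖
          · simp [S, h, h.le]
          · simp [S, h]
      _ = (∫⁻ ξ in Metric.closedBall (0 : E 2) ‖η‖, ‖ξ‖ₑ⁻¹) * A η ^ 2 := by
          rw [lintegral_indicator Metric.isClosed_closedBall.measurableSet,
            lintegral_mul_const _ (by fun_prop)]
      _ ≤ K * ‖η‖ₑ * A η ^ 2 := mul_le_mul' (hK η) le_rfl
      _ = K * (‖η‖ₑ * A η ^ 2) := by ring
  have hpt : ∀ ξ : E 2, ‖ξ‖ₑ⁻¹ * (∫⁻ η, A η * B (ξ - η)) ^ 2 ≤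
      2 * K * P ξ + 2 * Y * (‖ξ‖ₑ⁻¹ * Q ξ) := by
    intro ξ
    rw [← lintegral_add_compl _ (Metric.isClosed_closedBall (x := (0 : E 2)) (ε := ‖ξ‖)).measurableSet]
    set u := ∫⁻ η in Metric.closedBall (0 : E 2) ‖ξ‖, A η * B (ξ - η)
    set v := ∫⁻ η in (Metric.closedBall (0 : E 2) ‖ξ‖)ᶜ, A η * B (ξ - η)
    have huv : (u + v) ^ 2 ≤ 2 * (u ^ 2 + v ^ 2) := by
      have := ENNReal.rpow_add_le_mul_rpow_add_rpow u v (p := 2) (by norm_num)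
      norm_num at this
      exact this
    calc ‖ξ‖ₑ⁻¹ * (u + v) ^ 2 ≤ ‖ξ‖ₑ⁻¹ * (2 * (P ξ * (K * ‖ξ‖ₑ) + Q ξ * Y)) := by
          gcongr
          refine huv.trans ?_
          gcongr
          · exact hI ξ
          · exact hII ξ
      _ = 2 * K * P ξ * (‖ξ‖ₑ⁻¹ * ‖ξ‖ₑ) + 2 * Y * (‖ξ‖ₑ⁻¹ * Q ξ) := by ring
      _ ≤ 2 * K * P ξ * 1 + 2 * Y * (‖ξ‖ₑ⁻¹ * Q ξ) := by
          gcongr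
          exact ENNReal.inv_mul_le_one _
      _ = _ := by rw [mul_one]
  have hPm : Measurable P := by
    apply Measurable.lintegral_prod_right'
      (f := fun p : E 2 × E 2 => (‖p.2‖ₑ * A p.2 ^ 2) * B (p.1 - p.2) ^ 2)
    fun_prop
  calc ∫⁻ ξ, ‖ξ‖ₑ⁻¹ * (∫⁻ η, A η * B (ξ - η)) ^ 2
      ≤ ∫⁻ ξ, (2 * K * P ξ + 2 * Y * (‖ξ‖ₑ⁻¹ * Q ξ)) := lintegral_mono hpt
    _ ≤ 2 * K * (X * Y) + 2 * Y * (K * X) := by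
        rw [lintegral_add_left (by fun_prop), lintegral_const_mul _ hPm, hP]
        gcongr
        rw [lintegral_const_mul' _ _ (ENNReal.mul_ne_top (by simp) hYt)]
        gcongr
    _ = 4 * K * X * Y := by ring

open SchwartzMap in
lemma aux_conv (f g h : 𝓢(E 2, ℂ)) (hh : ∀ x, h x = f x * g x) (ξ : E 2) :
    𝓕 h ξ = ∫ η, 𝓕 f η * 𝓕 g (ξ - η) := by
  have e : h = 𝓕⁻ (SchwartzMap.convolution (ContinuousLinearMap.mul ℂ ℂ) (𝓕 f) (𝓕 g)) := by
    ext x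
    have key : ∀ u : 𝓢(E 2, ℂ), 𝓕 (𝓕 u) (-x) = u x := by
      intro u
      have h1 : 𝓕⁻ (𝓕 u) x = u x := by simp
      rw [← h1, SchwartzMap.fourierInv_coe, Real.fourierInv_eq_fourier_neg,
        SchwartzMap.fourier_coe (𝓕 u)]
    rw [SchwartzMap.fourierInv_coe, Real.fourierInv_eq_fourier_neg, ← SchwartzMap.fourier_coe,
      SchwartzMap.fourier_convolution]
    simp [key, hh]
  rw [e, FourierTransform.fourier_fourierInv_eq, SchwartzMap.convolution_apply]
  rfl

open SchwartzMap in
lemma aux_schwartz {K : ℝ≥0∞} (hKt : K ≠ ⊤) (hK : ∀ x : E 2,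
    ∫⁻ ξ in Metric.closedBall (0 : E 2) ‖x‖, ‖ξ‖ₑ⁻¹ ≤ K * ‖x‖ₑ)
    (f g h : 𝓢(E 2, ℂ)) (hh : ∀ x, h x = f x * g x) :
    ∫ ξ : E 2, ‖ξ‖ ^ (2 * (-(1/2)) : ℝ) * ‖𝓕 h ξ‖ ^ 2 ≤
      (4 * K).toReal * (∫ ξ : E 2, ‖ξ‖ ^ (2 * (1/2) : ℝ) * ‖𝓕 f ξ‖ ^ 2) * ∫ x, ‖g x‖ ^ 2 := by
  have hsq : ∀ u : 𝓢(E 2, ℂ), ∀ k : ℕ, Integrable (fun ξ : E 2 => ‖ξ‖ ^ k * ‖u ξ‖ ^ 2) := by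
    intro u k
    have h1 := (u.integrable_pow_mul volume k).mul_bdd (c := SchwartzMap.seminorm ℝ 0 0 u)
      (g := fun ξ => ‖u ξ‖) (u.continuous.norm.aestronglyMeasurable)
      (.of_forall fun ξ => by simpa using SchwartzMap.norm_le_seminorm ℝ u ξ)
    refine h1.congr (.of_forall fun ξ => ?_)
    simp only
    ring
  have hY : ∫⁻ ξ : E 2, ‖𝓕 g ξ‖ₑ ^ 2 = ENNReal.ofReal (∫ x, ‖g x‖ ^ 2) := by
    rw [← SchwartzMap.integral_norm_sq_fourier, ofReal_integral_eq_lintegral_ofReal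
      (by simpa using hsq (𝓕 g) 0) (.of_forall fun ξ => by positivity)]
    simp [ENNReal.ofReal_pow]
  have hX : ∫⁻ ξ : E 2, ‖ξ‖ₑ * ‖𝓕 f ξ‖ₑ ^ 2 =
      ENNReal.ofReal (∫ ξ : E 2, ‖ξ‖ ^ (2 * (1/2) : ℝ) * ‖𝓕 f ξ‖ ^ 2) := by
    have e : ∀ ξ : E 2, ‖ξ‖ ^ (2 * (1/2) : ℝ) = ‖ξ‖ := by intro ξ; norm_num
    simp only [e]
    rw [ofReal_integral_eq_lintegral_ofReal
      (by simpa using hsq (𝓕 f) 1) (.of_forall fun ξ => by positivity)]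
    simp [ENNReal.ofReal_pow, ENNReal.ofReal_mul]
  have hm := aux_main hK (A := fun ξ => ‖𝓕 f ξ‖ₑ) (B := fun ξ => ‖𝓕 g ξ‖ₑ)
    (𝓕 f).continuous.enorm.measurable (𝓕 g).continuous.enorm.measurable
    (by rw [hY]; exact ENNReal.ofReal_ne_top)
  rw [hX, hY] at hm
  set I2 := ∫ ξ : E 2, ‖ξ‖ ^ (2 * (1/2) : ℝ) * ‖𝓕 f ξ‖ ^ 2
  set I3 := ∫ x, ‖g x‖ ^ 2
  have hI2 : 0 ≤ I2 := integral_nonneg fun ξ => by positivity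
  have hI3 : 0 ≤ I3 := integral_nonneg fun ξ => by positivity
  have hle : ∫⁻ ξ : E 2, ENNReal.ofReal (‖ξ‖ ^ (2 * (-(1/2)) : ℝ) * ‖𝓕 h ξ‖ ^ 2) ≤
      4 * K * ENNReal.ofReal I2 * ENNReal.ofReal I3 := by
    refine le_trans (lintegral_mono fun ξ => ?_) hm
    rw [ENNReal.ofReal_mul (by positivity), ENNReal.ofReal_pow (norm_nonneg _), ofReal_norm]
    refine mul_le_mul' ?_ (pow_le_pow_left' ?_ 2)
    · have e : ‖ξ‖ ^ (2 * (-(1/2)) : ℝ) = ‖ξ‖⁻¹ := by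
        norm_num [Real.rpow_neg_one]
      rw [e, ← ofReal_norm]
      exact ENNReal.ofReal_inv_le
    · rw [aux_conv f g h hh ξ]
      refine (enorm_integral_le_lintegral_enorm _).trans (le_of_eq ?_)
      simp
  have hcont : AEStronglyMeasurable
      (fun ξ : E 2 => ‖ξ‖ ^ (2 * (-(1/2)) : ℝ) * ‖𝓕 h ξ‖ ^ 2) volume := by
    have : Measurable (fun ξ : E 2 => ‖𝓕 h ξ‖) := (𝓕 h).continuous.norm.measurable
    exact Measurable.aestronglyMeasurable (by fun_prop)
  rw [integral_eq_lintegral_of_nonneg_ae (.of_forall fun ξ => by positivity) hcont]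
  refine (ENNReal.toReal_mono ?_ hle).trans (le_of_eq ?_)
  · exact ENNReal.mul_ne_top (ENNReal.mul_ne_top (ENNReal.mul_ne_top (by simp) hKt)
      ENNReal.ofReal_ne_top) ENNReal.ofReal_ne_top
  · rw [ENNReal.toReal_mul, ENNReal.toReal_mul, ENNReal.toReal_ofReal hI2,
      ENNReal.toReal_ofReal hI3]

/-- 2D product law `‖ab‖_{Ḣ^{-1/2}(ℝ²)} ≤ C ‖a‖_{Ḣ^{1/2}(ℝ²)} ‖b‖_{L²(ℝ²)}`. -/
theorem product_law_2d :
    ∃ C > (0:ℝ), ∀ a b : E 2 → ℝ,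
      ContDiff ℝ (⊤ : ℕ∞) a → HasCompactSupport a → ContDiff ℝ (⊤ : ℕ∞) b → HasCompactSupport b →
      hNorm 2 (-(1/2)) (fun x => ((a x * b x : ℝ) : ℂ)) ≤
        C * hNorm 2 (1/2) (fun x => ((a x : ℝ) : ℂ)) * (∫ x : E 2, (b x) ^ 2) ^ (1/2 : ℝ) := by

  obtain ⟨K, hKt, hK⟩ := aux_radial
  refine ⟨(4 * K).toReal ^ (1/2 : ℝ) + 1, by positivity, ?_⟩
  intro a b ha hac hb hbc
  have key : ∀ u : E 2 → ℝ, ContDiff ℝ (⊤ : ℕ∞) u → HasCompactSupport u →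
      ∃ f : SchwartzMap (E 2) ℂ, (f : E 2 → ℂ) = fun x => ((u x : ℝ) : ℂ) := by
    intro u hu huc
    have h1 : HasCompactSupport (fun x => ((u x : ℝ) : ℂ)) :=
      huc.comp_left (g := fun t : ℝ => (t : ℂ)) (by simp)
    exact ⟨h1.toSchwartzMap (Complex.ofRealCLM.contDiff.comp hu), rfl⟩
  obtain ⟨f, hf⟩ := key a ha hac
  obtain ⟨g, hg⟩ := key b hb hbc
  obtain ⟨h, hh⟩ := key (fun x => a x * b x) (ha.mul hb) (hac.mul_right)
  have hmain := aux_schwartz hKt hK f g h (fun x => by simp [hf, hg, hh])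
  have hg2 : ∫ x, ‖g x‖ ^ 2 = ∫ x : E 2, (b x) ^ 2 := by
    simp [hg]
  rw [hg2, SchwartzMap.fourier_coe, SchwartzMap.fourier_coe, hf, hh] at hmain
  unfold hNorm
  set I1 := ∫ ξ : E 2, ‖ξ‖ ^ (2 * (-(1/2)) : ℝ) * ‖𝓕 (fun x => ((a x * b x : ℝ) : ℂ)) ξ‖ ^ 2
  set I2 := ∫ ξ : E 2, ‖ξ‖ ^ (2 * (1/2) : ℝ) * ‖𝓕 (fun x => ((a x : ℝ) : ℂ)) ξ‖ ^ 2
  set I3 := ∫ x : E 2, (b x) ^ 2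
  have hI1 : 0 ≤ I1 := integral_nonneg fun ξ => by positivity
  have hI2 : 0 ≤ I2 := integral_nonneg fun ξ => by positivity
  have hI3 : 0 ≤ I3 := integral_nonneg fun ξ => by positivity
  calc I1 ^ (1/2 : ℝ) ≤ ((4 * K).toReal * I2 * I3) ^ (1/2 : ℝ) :=
        Real.rpow_le_rpow hI1 hmain (by norm_num)
    _ = (4 * K).toReal ^ (1/2 : ℝ) * I2 ^ (1/2 : ℝ) * I3 ^ (1/2 : ℝ) := by
        rw [Real.mul_rpow (by positivity) hI3, Real.mul_rpow (by positivity) hI2]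
    _ ≤ ((4 * K).toReal ^ (1/2 : ℝ) + 1) * I2 ^ (1/2 : ℝ) * I3 ^ (1/2 : ℝ) := by
        gcongr
        linarith
end
end
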